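/- If f: (X, μ_X) → (Y, μ_Y) is an H-map between H-spaces, then the homotopy fiber of f is an H-space. -/

import Mathlib

open scoped Topology
open ContinuousMap

/-- Pointed homotopy: homotopy relative to the basepoint. -/
def PHomotopic {X Y : Type*} [TopologicalSpace X] [TopologicalSpace Y]
    (x₀ : X) (f g : C(X, Y)) : Prop :=
  ContinuousMap.HomotopicRel f g {x₀}

/-- A pointed map is null (inessential) if it is pointed-homotopic to the constant map. -/
def PNull {X Y : Type*} [TopologicalSpace X] [TopologicalSpace Y]
    (x₀ : X) (y₀ : Y) (f : C(X, Y)) : Prop :=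
  f x₀ = y₀ ∧ PHomotopic x₀ f (ContinuousMap.const X y₀)

/-- An H-space structure on a pointed space: a multiplication whose restriction to the
wedge is homotopic (rel basepoint) to the fold map, i.e. both units hold up to pointed homotopy. -/
structure HSpaceStr (X : Type*) [TopologicalSpace X] (x₀ : X) where
  mul : C(X × X, X)
  mul_pt : mul (x₀, x₀) = x₀
  left_unit : PHomotopic x₀ (mul.comp ((ContinuousMap.const X x₀).prodMk (ContinuousMap.id X)))
      (ContinuousMap.id X)
  right_unit : PHomotopic x₀ (mul.comp ((ContinuousMap.id X).prodMk (ContinuousMap.const X x₀)))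
      (ContinuousMap.id X)

/-- `f : X → X'` is an H-map with respect to H-structures `μ`, `μ'`. -/
def IsHMap {X X' : Type*} [TopologicalSpace X] [TopologicalSpace X']
    {x₀ : X} {x₀' : X'} (μ : HSpaceStr X x₀) (μ' : HSpaceStr X' x₀') (f : C(X, X')) : Prop :=
  f x₀ = x₀' ∧ PHomotopic (x₀, x₀) (f.comp μ.mul) (μ'.mul.comp (f.prodMap f))


/-- The homotopy fiber of a pointed map `f : X → Y` over `y₀`. -/
def HFiber {X Y : Type*} [TopologicalSpace X] [TopologicalSpace Y]
    (f : C(X, Y)) (y₀ : Y) : Type _ :=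
  {z : X × C(unitInterval, Y) // z.2 0 = f z.1 ∧ z.2 1 = y₀}

instance {X Y : Type*} [TopologicalSpace X] [TopologicalSpace Y] (f : C(X, Y)) (y₀ : Y) :
    TopologicalSpace (HFiber f y₀) :=
  inferInstanceAs (TopologicalSpace {z : X × C(unitInterval, Y) // z.2 0 = f z.1 ∧ z.2 1 = y₀})

/-- The basepoint of the homotopy fiber of a pointed map. -/
def HFiber.pt {X Y : Type*} [TopologicalSpace X] [TopologicalSpace Y]
    {f : C(X, Y)} {x₀ : X} {y₀ : Y} (hf : f x₀ = y₀) : HFiber f y₀ :=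
  ⟨(x₀, ContinuousMap.const _ y₀), by simp [hf]⟩

namespace HFib

open unitInterval

/-- first half reparametrisation -/
noncomputable def r1 : C(I, I) := ⟨fun t => Set.projIcc 0 1 zero_le_one (2 * (t : ℝ)), by fun_prop⟩
/-- second half reparametrisation -/
noncomputable def r2 : C(I, I) :=
  ⟨fun t => Set.projIcc 0 1 zero_le_one (2 * (t : ℝ) - 1), by fun_prop⟩

lemma r1_zero : r1 0 = 0 := by
  apply Subtype.ext; simp [r1, Set.projIcc]
lemma r2_one : r2 1 = 1 := by
  apply Subtype.ext; simp [r2, Set.projIcc]; norm_num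
lemma r2_of_le {t : I} (h : (t : ℝ) ≤ 1 / 2) : r2 t = 0 := by
  apply Subtype.ext; simp only [r2, Set.projIcc, ContinuousMap.coe_mk, Set.Icc.coe_zero]
  rw [min_eq_right (by linarith), max_eq_left (by linarith)]
lemma r1_half {t : I} (h : (t : ℝ) = 1 / 2) : r1 t = 1 := by
  apply Subtype.ext; simp [r1, Set.projIcc, h]

section
variable {A B X Y : Type*} [TopologicalSpace A] [TopologicalSpace B] [TopologicalSpace X]
  [TopologicalSpace Y]

/-- concatenation of families of paths -/
noncomputable def cat (p q : C(A × I, Y)) (h : ∀ a, p (a, 1) = q (a, 0)) : C(A × I, Y) where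
  toFun z := if (z.2 : ℝ) ≤ 1 / 2 then p (z.1, r1 z.2) else q (z.1, r2 z.2)
  continuous_toFun := by
    apply Continuous.if_le (by fun_prop) (by fun_prop) (by fun_prop) (by fun_prop)
    intro z hz
    rw [r1_half hz, r2_of_le hz.le, h]

lemma cat_apply (p q : C(A × I, Y)) (h) (a : A) (t : I) : cat p q h (a, t) =
    if (t : ℝ) ≤ 1 / 2 then p (a, r1 t) else q (a, r2 t) := rfl

lemma cat_zero (p q : C(A × I, Y)) (h) (a : A) : cat p q h (a, 0) = p (a, 0) := by
  simp [cat_apply, r1_zero]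

lemma cat_one (p q : C(A × I, Y)) (h) (a : A) : cat p q h (a, 1) = q (a, 1) := by
  rw [cat_apply, if_neg (by norm_num), r2_one]

lemma cat_ext {p q : C(A × I, Y)} {h} {p' q' : C(B × I, Y)} {h'} {a : A} {b : B}
    (hp : ∀ t, p (a, t) = p' (b, t)) (hq : ∀ t, q (a, t) = q' (b, t)) (t : I) :
    cat p q h (a, t) = cat p' q' h' (b, t) := by
  simp [cat_apply, hp, hq]

lemma cat_based {p q : C(A × I, Y)} {h} {a : A} {y : Y}
    (hp : ∀ t, p (a, t) = y) (hq : ∀ t, q (a, t) = y) (t : I) :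
    cat p q h (a, t) = y := by
  simp [cat_apply, hp, hq]

/-- reversal -/
def sy (p : C(A × I, Y)) : C(A × I, Y) := ⟨fun z => p (z.1, σ z.2), by fun_prop⟩

@[simp] lemma sy_apply (p : C(A × I, Y)) (a : A) (t : I) : sy p (a, t) = p (a, σ t) := rfl

/-- homotopy of families of paths rel endpoints and rel basepoint -/
def PR (a₀ : A) (p q : C(A × I, Y)) : Prop :=
  HomotopicRel p q {z | z.1 = a₀ ∨ z.2 = 0 ∨ z.2 = 1}

lemma PR.trans {a₀ : A} {p q r : C(A × I, Y)} (h : PR a₀ p q) (h' : PR a₀ q r) : PR a₀ p r :=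
  HomotopicRel.trans h h'
lemma PR.symm {a₀ : A} {p q : C(A × I, Y)} (h : PR a₀ p q) : PR a₀ q p :=
  HomotopicRel.symm h

lemma PR.mk {a₀ : A} {p q : C(A × I, Y)} (G : C((I × A) × I, Y))
    (h0 : ∀ a t, G ((0, a), t) = p (a, t)) (h1 : ∀ a t, G ((1, a), t) = q (a, t))
    (e0 : ∀ s a, G ((s, a), 0) = p (a, 0)) (e1 : ∀ s a, G ((s, a), 1) = p (a, 1))
    (b : ∀ s t, G ((s, a₀), t) = p (a₀, t)) : PR a₀ p q := by
  refine ⟨⟨⟨⟨fun z => G ((z.1, z.2.1), z.2.2), by fun_prop⟩, ?_, ?_⟩, ?_⟩⟩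
  · rintro ⟨a, t⟩; exact h0 a t
  · rintro ⟨a, t⟩; exact h1 a t
  · rintro s ⟨a, t⟩ (h | h | h)
    · obtain rfl : a = a₀ := h
      exact b s t
    · obtain rfl : t = 0 := h
      exact e0 s a
    · obtain rfl : t = 1 := h
      exact e1 s a

lemma PR.elim {a₀ : A} {p q : C(A × I, Y)} (h : PR a₀ p q) : ∃ G : C((I × A) × I, Y),
    (∀ a t, G ((0, a), t) = p (a, t)) ∧ (∀ a t, G ((1, a), t) = q (a, t)) ∧
    (∀ s a, G ((s, a), 0) = p (a, 0)) ∧ (∀ s a, G ((s, a), 1) = p (a, 1)) ∧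
    (∀ s t, G ((s, a₀), t) = p (a₀, t)) := by
  obtain ⟨F⟩ := h
  refine ⟨⟨fun z => F (z.1.1, (z.1.2, z.2)), by fun_prop⟩, ?_, ?_, ?_, ?_, ?_⟩
  · intro a t; exact F.apply_zero _
  · intro a t; exact F.apply_one _
  · intro s a; exact F.eq_fst s (by simp)
  · intro s a; exact F.eq_fst s (by simp)
  · intro s t; exact F.eq_fst s (by simp)

/-- pullback of a family along the projection -/
def pb (p : C(A × I, Y)) : C((I × A) × I, Y) := ⟨fun z => p (z.1.2, z.2), by fun_prop⟩

@[simp] lemma pb_apply (p : C(A × I, Y)) (s : I) (a : A) (t : I) :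
    pb p ((s, a), t) = p (a, t) := rfl

lemma cat_const {a₀ : A} {y₀ : Y} (p q : C(A × I, Y)) (h : ∀ a, p (a, 1) = q (a, 0))
    (hp : ∀ a t, p (a, t) = p (a, 1)) (hq : ∀ t, q (a₀, t) = y₀) :
    PR a₀ (cat p q h) q := by
  have key : ∀ a t, cat p q h (a, t) = q (a, r2 t) := by
    intro a t
    rw [cat_apply]
    split_ifs with ht
    · rw [hp, h, r2_of_le ht]
    · rfl
  refine PR.mk ⟨fun z => q (z.1.2, Set.projIcc 0 1 zero_le_one
    ((1 - (z.1.1 : ℝ)) * (r2 z.2 : ℝ) + (z.1.1 : ℝ) * (z.2 : ℝ))), by fun_prop⟩ ?_ ?_ ?_ ?_ ?_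
  · intro a t; simp [key]
  · intro a t; simp
  · intro s a
    have : r2 0 = 0 := r2_of_le (by norm_num)
    simp [key, this]
  · intro s a
    simp [key, r2_one]
  · intro s t
    simp [key, hq]

lemma cat_congr {a₀ : A} (p q q' : C(A × I, Y)) (h : ∀ a, p (a, 1) = q (a, 0))
    (h' : ∀ a, p (a, 1) = q' (a, 0)) (H : PR a₀ q q') : PR a₀ (cat p q h) (cat p q' h') := by
  obtain ⟨G, g0, g1, e0, e1, b⟩ := H.elim
  refine PR.mk (cat (pb p) G ?_) ?_ ?_ ?_ ?_ ?_
  · rintro ⟨s, a⟩; rw [e0, pb_apply, h]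
  · intro a t; refine cat_ext (fun t => by rfl) (fun t => ?_) t; exact g0 a t
  · intro a t; refine cat_ext (fun t => by rfl) (fun t => ?_) t; exact g1 a t
  · intro s a; rw [cat_zero, cat_zero]; rfl
  · intro s a; rw [cat_one, cat_one, e1]
  · intro s t; refine cat_ext (fun t => by rfl) (fun t => ?_) t; exact b s t

lemma cat_cancel {a₀ : A} {y₀ : Y} (p q : C(A × I, Y)) (h2 : ∀ a, sy p (a, 1) = q (a, 0)) (h1)
    (bp : ∀ t, p (a₀, t) = y₀) (bq : ∀ t, q (a₀, t) = y₀) :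
    PR a₀ (cat p (cat (sy p) q h2) h1) q := by
  let c : C(A × I, Y) := ⟨fun z => p (z.1, 0), by fun_prop⟩
  have hc : ∀ a t, c (a, t) = p (a, 0) := fun _ _ => rfl
  have h2' : ∀ a, sy c (a, 1) = q (a, 0) := fun a => by simpa [hc] using h2 a
  have h1' : ∀ a, c (a, 1) = cat (sy c) q h2' (a, 0) := fun a => by simp [cat_zero, hc]
  have s1 : PR a₀ (cat (sy c) q h2') q := cat_const _ _ _ (fun a t => rfl) bq
  have s2 : PR a₀ (cat c (cat (sy c) q h2') h1') (cat (sy c) q h2') :=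
    cat_const (y₀ := y₀) _ _ _ (fun a t => rfl) (cat_based (fun t => by simp [hc, bp]) bq)
  refine PR.trans ?_ (s2.trans s1)
  let P : C((I × A) × I, Y) := ⟨fun z => p (z.1.2, σ z.1.1 * z.2), by fun_prop⟩
  have hP : ∀ s a t, P ((s, a), t) = p (a, σ s * t) := fun _ _ _ => rfl
  have k2 : ∀ z, sy P (z, 1) = pb q (z, 0) := by
    rintro ⟨s, a⟩; simpa [hP] using h2 a
  refine PR.mk (cat P (cat (sy P) (pb q) k2) ?_) ?_ ?_ ?_ ?_ ?_
  · rintro ⟨s, a⟩; simp [cat_zero]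
  · intro a t
    refine cat_ext (fun t => ?_) (fun t => cat_ext (fun t => ?_) (fun t => by rfl) t) t
    · simp [hP]
    · simp [hP]
  · intro a t
    refine cat_ext (fun t => ?_) (fun t => cat_ext (fun t => ?_) (fun t => by rfl) t) t
    · simp [hP, hc]
    · simp [hP, hc]
  · intro s a; simp [cat_zero, hP]
  · intro s a; simp [cat_one]
  · intro s t
    refine cat_ext (fun t => ?_) (fun t => cat_ext (fun t => ?_) (fun t => by rfl) t) t
    · simp [hP, bp]
    · simp [hP, bp]

lemma natural {a₀ : A} {y₀ : Y} (N : C(Y × I, Y)) (N1 : ∀ y, N (y, 1) = y)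
    (Nb : ∀ s, N (y₀, s) = y₀) (γ : C(A × I, Y)) (γ1 : ∀ a, γ (a, 1) = y₀)
    (bγ : ∀ t, γ (a₀, t) = y₀) (n l : C(A × I, Y)) (hn : ∀ a t, n (a, t) = N (γ (a, t), 0))
    (hl : ∀ a t, l (a, t) = N (γ (a, 0), t)) (h) :
    PR a₀ n (cat l γ h) := by
  let c : C(A × I, Y) := ⟨fun z => N (γ (z.1, 0), 0), by fun_prop⟩
  have hc : ∀ a t, c (a, t) = N (γ (a, 0), 0) := fun _ _ => rfl
  have h' : ∀ a, c (a, 1) = n (a, 0) := fun a => by rw [hc, hn]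
  have s1 : PR a₀ (cat c n h') n :=
    cat_const (y₀ := y₀) _ _ _ (fun a t => rfl) (fun t => by rw [hn, bγ, Nb])
  refine s1.symm.trans ?_
  let P : C((I × A) × I, Y) := ⟨fun z => N (γ (z.1.2, 0), z.1.1 * z.2), by fun_prop⟩
  have hP : ∀ s a t, P ((s, a), t) = N (γ (a, 0), s * t) := fun _ _ _ => rfl
  let Q : C((I × A) × I, Y) := ⟨fun z => N (γ (z.1.2, z.2), z.1.1), by fun_prop⟩
  have hQ : ∀ s a t, Q ((s, a), t) = N (γ (a, t), s) := fun _ _ _ => rfl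
  refine PR.mk (cat P Q ?_) ?_ ?_ ?_ ?_ ?_
  · rintro ⟨s, a⟩; simp [hP, hQ]
  · intro a t
    refine cat_ext (fun t => ?_) (fun t => ?_) t
    · simp [hP, hc]
    · simp [hQ, hn]
  · intro a t
    refine cat_ext (fun t => ?_) (fun t => ?_) t
    · simp [hP, hl]
    · simp [hQ, N1]
  · intro s a; simp [cat_zero, hP, hc]
  · intro s a; simp [cat_one, hQ, hn, γ1, Nb]
  · intro s t
    refine cat_ext (fun t => ?_) (fun t => ?_) t
    · simp [hP, hc, bγ, Nb]
    · simp [hQ, hn, bγ, Nb]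

variable {f : C(X, Y)} {y₀ : Y}

/-- maps into the homotopy fiber -/
def mkF (u : C(A, X)) (γ : C(A × I, Y)) (h0 : ∀ a, γ (a, 0) = f (u a))
    (h1 : ∀ a, γ (a, 1) = y₀) : C(A, HFiber f y₀) where
  toFun a := ⟨(u a, γ.curry a), h0 a, h1 a⟩
  continuous_toFun := Continuous.subtype_mk (by fun_prop) _

lemma mkF_eq {u : C(A, X)} {γ : C(A × I, Y)} {h0} {h1} {u' : C(B, X)} {γ' : C(B × I, Y)} {h0'} {h1'}
    {a : A} {b : B} (hu : u a = u' b) (hγ : ∀ t, γ (a, t) = γ' (b, t)) :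
    (mkF u γ h0 h1 : C(A, HFiber f y₀)) a = mkF u' γ' h0' h1' b :=
  Subtype.ext (Prod.ext hu (ContinuousMap.ext hγ))

lemma mkF_congr {a₀ : A} (u : C(A, X)) (γ γ' : C(A × I, Y)) (h0 h1 h0' h1') (H : PR a₀ γ γ') :
    HomotopicRel (mkF u γ h0 h1 : C(A, HFiber f y₀)) (mkF u γ' h0' h1') {a₀} := by
  obtain ⟨G, g0, g1, e0, e1, b⟩ := H.elim
  refine ⟨⟨⟨mkF (u.comp ContinuousMap.snd) G ?_ ?_, ?_, ?_⟩, ?_⟩⟩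
  · rintro ⟨s, a⟩; rw [e0, h0]; rfl
  · rintro ⟨s, a⟩; rw [e1, h1]
  · intro a; exact mkF_eq rfl (g0 a)
  · intro a; exact mkF_eq rfl (g1 a)
  · rintro s a rfl
    refine mkF_eq (γ := G) (h0 := ?_) (h1 := ?_) rfl (b s)
    · rintro ⟨s, a⟩; rw [e0, h0]; rfl
    · rintro ⟨s, a⟩; rw [e1, h1]

/-- projection to `X` -/
def prX : C(HFiber f y₀, X) := ⟨fun z => z.1.1, continuous_fst.comp continuous_subtype_val⟩
/-- the path family -/
def prP : C(HFiber f y₀ × I, Y) :=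
  ⟨fun z => z.1.1.2 z.2, by
    have : Continuous fun z : HFiber f y₀ => z.1.2 := continuous_snd.comp continuous_subtype_val
    fun_prop⟩

lemma prP_zero (z : HFiber f y₀) : prP (z, 0) = f (prX z) := z.2.1
lemma prP_one (z : HFiber f y₀) : prP (z, 1) = y₀ := z.2.2

/-- pull back a homotopy on `X` to the fiber -/
def pu (h : C(X × I, Y)) : C(HFiber f y₀ × I, Y) := ⟨fun z => h (prX z.1, z.2), by fun_prop⟩

@[simp] lemma pu_apply (h : C(X × I, Y)) (z : HFiber f y₀) (t : I) :
    pu h (z, t) = h (prX z, t) := rfl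

/-- the data of a one-sided unit -/
structure UD (f : C(X, Y)) (x₀ : X) (y₀ : Y) where
  K : C(X × I, X)
  N : C(Y × I, Y)
  h : C(X × I, Y)
  K1 : ∀ x, K (x, 1) = x
  Kb : ∀ t, K (x₀, t) = x₀
  N1 : ∀ y, N (y, 1) = y
  Nb : ∀ t, N (y₀, t) = y₀
  h0 : ∀ x, h (x, 0) = f (K (x, 0))
  h1 : ∀ x, h (x, 1) = N (f x, 0)
  hb : ∀ t, h (x₀, t) = y₀

variable {x₀ : X}

/-- the homotopy `f K` -/
def UD.k (D : UD f x₀ y₀) : C(X × I, Y) := f.comp D.K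
/-- the homotopy `N f` -/
def UD.l (D : UD f x₀ y₀) : C(X × I, Y) := ⟨fun z => D.N (f z.1, z.2), by fun_prop⟩

/-- auxiliary -/
noncomputable def UD.T1 (D : UD f x₀ y₀) : C(HFiber f y₀ × I, Y) :=
  cat (pu D.k) prP (fun a => by rw [prP_zero, pu_apply]; exact congrArg f (D.K1 _))
/-- auxiliary -/
noncomputable def UD.T2 (D : UD f x₀ y₀) : C(HFiber f y₀ × I, Y) :=
  cat (sy (pu D.h)) D.T1 (fun a => by
    rw [UD.T1, cat_zero]; simp only [sy_apply, pu_apply, unitInterval.symm_one, D.h0]; rfl)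
/-- auxiliary -/
noncomputable def UD.T (D : UD f x₀ y₀) : C(HFiber f y₀ × I, Y) :=
  cat (sy (pu D.l)) D.T2 (fun a => by
    rw [UD.T2, cat_zero]
    simp only [sy_apply, pu_apply, unitInterval.symm_one, unitInterval.symm_zero, D.h1]; rfl)

lemma UD.T_zero (D : UD f x₀ y₀) (z : HFiber f y₀) : D.T (z, 0) = f (prX z) := by
  rw [UD.T, cat_zero]
  simp only [sy_apply, pu_apply, unitInterval.symm_zero]
  exact D.N1 _
lemma UD.T2_one (D : UD f x₀ y₀) (z : HFiber f y₀) : D.T2 (z, 1) = y₀ := by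
  rw [UD.T2, cat_one, UD.T1, cat_one, prP_one]
lemma UD.T_one (D : UD f x₀ y₀) (z : HFiber f y₀) : D.T (z, 1) = y₀ := by
  rw [UD.T, cat_one, D.T2_one]

lemma prP_pt (hf : f x₀ = y₀) (t : I) : prP (HFiber.pt hf, t) = y₀ := rfl
lemma prX_pt (hf : f x₀ = y₀) : prX (HFiber.pt hf) = x₀ := rfl

lemma UD.T1_pt (D : UD f x₀ y₀) (hf : f x₀ = y₀) (t : I) : D.T1 (HFiber.pt hf, t) = y₀ :=
  cat_based (fun t => by exact (congrArg f (D.Kb t)).trans hf) (prP_pt hf) t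
lemma UD.T2_pt (D : UD f x₀ y₀) (hf : f x₀ = y₀) (t : I) : D.T2 (HFiber.pt hf, t) = y₀ :=
  cat_based (fun t => by exact D.hb _) (D.T1_pt hf) t
lemma UD.l_pt (D : UD f x₀ y₀) (t : I) (hf : f x₀ = y₀) : D.l (x₀, t) = y₀ := by
  change D.N (f x₀, _) = y₀; rw [hf, D.Nb]
lemma UD.T_pt (D : UD f x₀ y₀) (hf : f x₀ = y₀) (t : I) : D.T (HFiber.pt hf, t) = y₀ :=
  cat_based (fun t => by exact D.l_pt _ hf) (D.T2_pt hf) t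

theorem UD.main (D : UD f x₀ y₀) (hf : f x₀ = y₀) (u : C(HFiber f y₀, X))
    (hu : ∀ z, u z = D.K (prX z, 0)) (n : C(HFiber f y₀ × I, Y))
    (hn : ∀ z t, n (z, t) = D.N (D.T (z, t), 0)) (h) (h0) (h1) :
    HomotopicRel (mkF u (cat (pu D.h) n h) h0 h1 : C(HFiber f y₀, HFiber f y₀))
      (ContinuousMap.id _) {HFiber.pt hf} := by
  have hl : ∀ z : HFiber f y₀, pu D.l (z, 1) = D.T (z, 0) := fun z => by
    rw [D.T_zero]; exact D.N1 _
  have p1 : PR (HFiber.pt hf) n (cat (pu D.l) D.T hl) :=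
    natural D.N D.N1 D.Nb D.T D.T_one (D.T_pt hf) n _ hn
      (fun a t => by rw [D.T_zero]; rfl) _
  have p2 : PR (HFiber.pt hf) (cat (pu D.l) D.T hl) D.T2 :=
    cat_cancel _ _ _ _ (fun t => D.l_pt t hf) (D.T2_pt hf)
  have hh : ∀ z : HFiber f y₀, pu D.h (z, 1) = D.T2 (z, 0) := fun z => by
    rw [UD.T2, cat_zero]; simp
  have p3 : PR (HFiber.pt hf) (cat (pu D.h) n h) (cat (pu D.h) D.T2 hh) :=
    cat_congr _ _ _ _ _ (p1.trans p2)
  have p4 : PR (HFiber.pt hf) (cat (pu D.h) D.T2 hh) D.T1 :=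
    cat_cancel _ _ _ _ (fun t => D.hb t) (D.T1_pt hf)
  have T10 : ∀ z, D.T1 (z, 0) = f (u z) := fun z => by rw [UD.T1, cat_zero, hu]; rfl
  have T11 : ∀ z, D.T1 (z, 1) = y₀ := fun z => by rw [UD.T1, cat_one, prP_one]
  refine (mkF_congr u _ D.T1 h0 h1 T10 T11 (p3.trans p4)).trans ?_
  -- slide along `K`
  let c : C(HFiber f y₀ × I, Y) := ⟨fun z => f (prX z.1), by fun_prop⟩
  have hc : ∀ z t, c (z, t) = f (prX z) := fun _ _ => rfl
  have hcp : ∀ z, c (z, 1) = prP (z, 0) := fun z => by rw [prP_zero, hc]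
  have q1 : PR (HFiber.pt hf) (cat c prP hcp) prP :=
    cat_const _ _ _ (fun _ _ => rfl) (prP_pt hf)
  have q2 : HomotopicRel (mkF prX (cat c prP hcp) (fun z => by rw [cat_zero, hc])
      (fun z => by rw [cat_one, prP_one]) : C(HFiber f y₀, HFiber f y₀))
      (mkF prX prP prP_zero prP_one) {HFiber.pt hf} := mkF_congr _ _ _ _ _ _ _ q1
  refine HomotopicRel.trans ?_ q2
  let P : C((I × HFiber f y₀) × I, Y) :=
    ⟨fun z => f (D.K (prX z.1.2, σ (σ z.1.1 * σ z.2))), by fun_prop⟩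
  have hP : ∀ s a t, P ((s, a), t) = f (D.K (prX a, σ (σ s * σ t))) := fun _ _ _ => rfl
  have hPp : ∀ z, P (z, 1) = pb prP (z, 0) := by
    rintro ⟨s, a⟩
    rw [pb_apply, prP_zero, hP]; simp [D.K1]
  refine ⟨⟨⟨mkF ⟨fun z => D.K (prX z.2, z.1), by fun_prop⟩ (cat P (pb prP) hPp) ?_ ?_, ?_, ?_⟩, ?_⟩⟩
  · rintro ⟨s, a⟩; rw [cat_zero, hP]; simp
  · rintro ⟨s, a⟩; rw [cat_one, pb_apply, prP_one]
  · intro a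
    refine mkF_eq (hu a).symm (fun t => cat_ext (fun t => ?_) (fun t => by rfl) t)
    rw [hP]; simp [UD.k]
  · intro a
    refine mkF_eq (D.K1 _) (fun t => cat_ext (fun t => ?_) (fun t => by rfl) t)
    rw [hP, hc]; simp [D.K1]
  · rintro s a rfl
    refine mkF_eq (h0 := ?_) (h1 := ?_) ?_ (fun t => cat_ext (fun t => ?_) (fun t => by rfl) t)
    · rintro ⟨s, a⟩; rw [cat_zero, hP]; simp
    · rintro ⟨s, a⟩; rw [cat_one, pb_apply, prP_one]
    · rw [hu, prX_pt, D.Kb]; exact D.Kb _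
    · rw [hP, prX_pt, D.Kb, pu_apply, prX_pt]; exact congrArg f (D.Kb _).symm

end

end HFib

open HFib unitInterval in
/-- the homotopy fiber of an H-map between H-spaces is an H-space. -/
theorem hfiber_of_hmap_is_hspace
    {X Y : Type*} [TopologicalSpace X] [TopologicalSpace Y] (x₀ : X) (y₀ : Y)
    (μX : HSpaceStr X x₀) (μY : HSpaceStr Y y₀) (f : C(X, Y))
    (hf : IsHMap μX μY f) :
    Nonempty (HSpaceStr (HFiber f y₀) (HFiber.pt hf.1)) := by
  obtain ⟨LX⟩ := μX.left_unit
  obtain ⟨RX⟩ := μX.right_unit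
  obtain ⟨LY⟩ := μY.left_unit
  obtain ⟨RY⟩ := μY.right_unit
  obtain ⟨hf0, ⟨H⟩⟩ := hf
  have Hb : ∀ t, H (t, (x₀, x₀)) = y₀ := fun t =>
    (H.eq_fst t rfl).trans (by simp [μX.mul_pt, hf0])
  have H0 : ∀ x x', H (0, (x, x')) = f (μX.mul (x, x')) := fun x x' => H.apply_zero _
  have H1 : ∀ x x', H (1, (x, x')) = μY.mul (f x, f x') := fun x x' => H.apply_one _
  have LX0 : ∀ x, LX (0, x) = μX.mul (x₀, x) := fun x => LX.apply_zero _
  have RX0 : ∀ x, RX (0, x) = μX.mul (x, x₀) := fun x => RX.apply_zero _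
  have LY0 : ∀ x, LY (0, x) = μY.mul (y₀, x) := fun x => LY.apply_zero _
  have RY0 : ∀ x, RY (0, x) = μY.mul (x, y₀) := fun x => RY.apply_zero _
  let DL : UD f x₀ y₀ :=
    { K := ⟨fun z => LX (z.2, z.1), by fun_prop⟩
      N := ⟨fun z => LY (z.2, z.1), by fun_prop⟩
      h := ⟨fun z => H (z.2, (x₀, z.1)), by fun_prop⟩
      K1 := fun x => LX.apply_one x
      Kb := fun t => (LX.eq_fst t rfl).trans μX.mul_pt
      N1 := fun x => LY.apply_one x
      Nb := fun t => (LY.eq_fst t rfl).trans μY.mul_pt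
      h0 := fun x => (H0 _ _).trans (congrArg f (LX0 x).symm)
      h1 := fun x => (H1 _ _).trans (by rw [hf0]; exact (LY0 _).symm)
      hb := Hb }
  let DR : UD f x₀ y₀ :=
    { K := ⟨fun z => RX (z.2, z.1), by fun_prop⟩
      N := ⟨fun z => RY (z.2, z.1), by fun_prop⟩
      h := ⟨fun z => H (z.2, (z.1, x₀)), by fun_prop⟩
      K1 := fun x => RX.apply_one x
      Kb := fun t => (RX.eq_fst t rfl).trans μX.mul_pt
      N1 := fun x => RY.apply_one x
      Nb := fun t => (RY.eq_fst t rfl).trans μY.mul_pt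
      h0 := fun x => (H0 _ _).trans (congrArg f (RX0 x).symm)
      h1 := fun x => (H1 _ _).trans (by rw [hf0]; exact (RY0 _).symm)
      hb := Hb }
  let F := HFiber f y₀
  let U : C(F × F, X) := ⟨fun z => μX.mul (prX z.1, prX z.2), by fun_prop⟩
  let P : C((F × F) × I, Y) := ⟨fun z => H (z.2, (prX z.1.1, prX z.1.2)), by fun_prop⟩
  let Q : C((F × F) × I, Y) :=
    ⟨fun z => μY.mul (DR.T (z.1.1, z.2), DL.T (z.1.2, z.2)), by fun_prop⟩
  have hQ : ∀ a b t, Q ((a, b), t) = μY.mul (DR.T (a, t), DL.T (b, t)) := fun _ _ _ => rfl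
  have hP : ∀ a b t, P ((a, b), t) = H (t, (prX a, prX b)) := fun _ _ _ => rfl
  have hPQ : ∀ z, P (z, 1) = Q (z, 0) := by
    rintro ⟨a, b⟩
    rw [hP, hQ, H1, UD.T_zero, UD.T_zero]
  have c0 : ∀ z, cat P Q hPQ (z, 0) = f (U z) := by
    rintro ⟨a, b⟩; rw [cat_zero, hP, H0]; rfl
  have c1 : ∀ z, cat P Q hPQ (z, 1) = y₀ := by
    rintro ⟨a, b⟩; rw [cat_one, hQ, UD.T_one, UD.T_one, μY.mul_pt]
  let M : C(F × F, F) := mkF U (cat P Q hPQ) c0 c1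
  let p : F := HFiber.pt hf0
  refine ⟨⟨M, ?_, ?_, ?_⟩⟩
  · refine Subtype.ext (Prod.ext μX.mul_pt (ContinuousMap.ext fun t => ?_))
    refine cat_based (h := hPQ) (fun t => ?_) (fun t => ?_) t
    · rw [hP]; exact Hb t
    · rw [hQ, UD.T_pt, UD.T_pt, μY.mul_pt]; rfl
  · let u : C(F, X) := ⟨fun z => μX.mul (x₀, prX z), by fun_prop⟩
    let n : C(F × I, Y) := DL.N.comp (DL.T.prodMk (ContinuousMap.const _ 0))
    have hn : ∀ z t, n (z, t) = Q ((p, z), t) := fun z t => by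
      rw [hQ, UD.T_pt]; exact LY0 _
    have h : ∀ z, pu DL.h (z, 1) = n (z, 0) := fun z => by
      rw [hn]; exact hPQ (p, z)
    have e : ∀ z t, cat (pu DL.h) n h (z, t) = cat P Q hPQ ((p, z), t) := fun z t =>
      cat_ext (fun t => by rfl) (hn z) t
    have := DL.main hf0 u (fun z => (LX0 _).symm) n (fun _ _ => rfl) h
      (fun z => by rw [e, c0]; rfl) (fun z => by rw [e, c1])
    unfold PHomotopic
    convert this using 1
    ext1 z
    exact mkF_eq (h0 := c0) (h1 := c1) rfl (fun t => (e z t).symm)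
  · let u : C(F, X) := ⟨fun z => μX.mul (prX z, x₀), by fun_prop⟩
    let n : C(F × I, Y) := DR.N.comp (DR.T.prodMk (ContinuousMap.const _ 0))
    have hn : ∀ z t, n (z, t) = Q ((z, p), t) := fun z t => by
      rw [hQ, UD.T_pt]; exact RY0 _
    have h : ∀ z, pu DR.h (z, 1) = n (z, 0) := fun z => by
      rw [hn]; exact hPQ (z, p)
    have e : ∀ z t, cat (pu DR.h) n h (z, t) = cat P Q hPQ ((z, p), t) := fun z t =>
      cat_ext (fun t => by rfl) (hn z) t
    have := DR.main hf0 u (fun z => (RX0 _).symm) n (fun _ _ => rfl) h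
      (fun z => by rw [e, c0]; rfl) (fun z => by rw [e, c1])
    unfold PHomotopic
    convert this using 1
    ext1 z
    exact mkF_eq (h0 := c0) (h1 := c1) rfl (fun t => (e z t).symm)
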